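/- There exists a real constant θ > 1 such that H(n)^{1/n} → θ as n → ∞, and moreover for every ε with 0 < ε < 1/6 there is a constant K > 0 such that for all sufficiently large n, |log H(n) − n·log θ| ≤ K·n·exp(−√((1/6 − ε)·log n·log log n)). -/

import Mathlib

/-!
Fix a cut-off `Q` and count only the GP-free subsets of the window `(n / Q, n]`. This changes
`log H n` by at most `n / Q` (`abs_log_H_sub_window`). A progression `a, a r, a r²` inside the
window has `r² < Q`, so it stays inside a class `{m t : t is Q-smooth}`, where `m` has only prime
factors larger than `Q`. The count therefore factorizes over such classes (`gpCount_union`), and it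
is invariant under dilation (`gpCount_image_mul`). Hence the increment at `n = m s` (with `s` the
`Q`-smooth part) of `B(n) = log #{GP-free subsets of the window}` depends only on `s`
(`log_gpCount_window_sub`), and it is bounded by `1` (`abs_incr_le`).

By Möbius inversion the increment at `k` is `∑ c(j)` over the `Q`-smooth divisors `j` of `k`, with
`|c(j)| ≤ d(j)`, the number of divisors. Summing over `k ≤ n` gives `B(n) = ∑ c(j) ⌊n / j⌋`. Replace
`⌊n / j⌋` by `n / j`, at a cost of at most `(n / j) ^ σ` (Rankin's device), and bound
`∑ d(j) j ^ (-σ)` over smooth `j` by its Euler product. With `C = ∑ c(j) / j` this yields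
`|log H n - n C| ≤ n / Q + n ^ σ exp (8 ∑_{p ≤ Q} p ^ (-σ))` for all `Q ≥ 1`, `1 / 2 ≤ σ < 1`
(`abs_log_H_sub_le`).

For fixed `Q` this shows that `log H n / n` is Cauchy, with a limit `Θ` within `1 / Q` of
`C = windowRate Q` (`exists_rate`); then `θ = exp Θ`. For the rate of convergence put
`T = √((1/6 - ε) log n log log n)`, `Q ≈ exp T` and `1 - σ = log log n / (4 (T + 1))`. Chebyshev's
bound gives `∑_{p ≤ Q} 1 / p = O(log log Q)`, so the Euler product costs only
`exp (O((log n) ^ (1/4) log log n))`, while `n ^ (σ - 1) ≤ exp (-5 T / 4)`, which is where the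
constant `1/6` is used (`exists_good_Q`).
-/

/-- A finite set of positive integers is free of 3-term geometric progressions with
integral ratio if it contains no three elements `a, a*r, a*r^2` with `a ≥ 1`, `r ≥ 2`. -/
def GPFree (S : Finset ℕ) : Prop :=
  ¬ ∃ a r : ℕ, 0 < a ∧ 2 ≤ r ∧ a ∈ S ∧ a * r ∈ S ∧ a * r ^ 2 ∈ S

/-- `H n` is the number of geometric-progression-free subsets of `{1, 2, …, n}`. -/
noncomputable def H (n : ℕ) : ℕ :=
  Nat.card {S : Finset ℕ // S ⊆ Finset.Icc 1 n ∧ GPFree S}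

/-! ### Counting GP-free subsets of a finite set -/

open Classical in
/-- The number of GP-free subsets of a finite set `A`. -/
noncomputable def gpCount (A : Finset ℕ) : ℕ :=
  (A.powerset.filter GPFree).card

theorem GPFree.mono {S T : Finset ℕ} (h : S ⊆ T) (hT : GPFree T) : GPFree S := by
  rintro ⟨a, r, ha, hr, h1, h2, h3⟩
  exact hT ⟨a, r, ha, hr, h h1, h h2, h h3⟩

theorem H_eq_gpCount (n : ℕ) : H n = gpCount (Finset.Icc 1 n) := by
  classical
  unfold H gpCount
  refine Nat.subtype_card _ fun S => ?_
  simp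

theorem gpCount_pos (A : Finset ℕ) : 0 < gpCount A := by
  classical
  unfold gpCount
  refine Finset.card_pos.2 ⟨∅, ?_⟩
  simp [GPFree]

theorem gpCount_mono {A B : Finset ℕ} (h : A ⊆ B) : gpCount A ≤ gpCount B := by
  classical
  unfold gpCount
  exact Finset.card_le_card
    (Finset.filter_subset_filter _ (Finset.powerset_mono.2 h))

theorem gpCount_le {A B : Finset ℕ} (h : A ⊆ B) :
    gpCount B ≤ gpCount A * 2 ^ (B \ A).card := by
  classical
  unfold gpCount
  rw [← Finset.card_powerset (B \ A), ← Finset.card_product]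
  refine Finset.card_le_card_of_injOn (fun S => (S ∩ A, S ∩ (B \ A))) ?_ ?_
  · intro S hS
    simp only [Finset.coe_filter, Finset.mem_powerset, Set.mem_ofPred_eq] at hS
    simp only [Finset.coe_product, Set.mem_prod, Finset.mem_coe, Finset.mem_filter,
      Finset.mem_powerset]
    exact ⟨⟨Finset.inter_subset_right, hS.2.mono Finset.inter_subset_left⟩,
      Finset.inter_subset_right⟩
  · intro S hS T hT hST
    simp only [Finset.coe_filter, Finset.mem_powerset, Set.mem_ofPred_eq] at hS hT
    simp only [Prod.mk.injEq] at hST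
    have key : ∀ S : Finset ℕ, S ⊆ B → S = (S ∩ A) ∪ (S ∩ (B \ A)) := by
      intro S hS
      rw [← Finset.inter_union_distrib_left, Finset.union_sdiff_of_subset h,
        Finset.inter_eq_left.2 hS]
    rw [key S hS.1, key T hT.1, hST.1, hST.2]

/-- If every progression inside `A ∪ B` lies in one of the two parts, the count factorizes. -/
theorem gpCount_union {A B : Finset ℕ} (hd : Disjoint A B)
    (h : ∀ a r : ℕ, 0 < a → 2 ≤ r → a ∈ A ∪ B → a * r ∈ A ∪ B → a * r ^ 2 ∈ A ∪ B →
      (a ∈ A ∧ a * r ∈ A ∧ a * r ^ 2 ∈ A) ∨ (a ∈ B ∧ a * r ∈ B ∧ a * r ^ 2 ∈ B)) :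
    gpCount (A ∪ B) = gpCount A * gpCount B := by
  classical
  unfold gpCount
  rw [← Finset.card_product]
  refine Finset.card_nbij' (fun S => (S ∩ A, S ∩ B)) (fun P => P.1 ∪ P.2) ?_ ?_ ?_ ?_
  · intro S hS
    simp only [Finset.coe_filter, Finset.mem_powerset, Set.mem_ofPred_eq] at hS
    simp only [Finset.coe_product, Set.mem_prod, Finset.mem_coe, Finset.mem_filter,
      Finset.mem_powerset]
    exact ⟨⟨Finset.inter_subset_right, hS.2.mono Finset.inter_subset_left⟩,
      ⟨Finset.inter_subset_right, hS.2.mono Finset.inter_subset_left⟩⟩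
  · rintro ⟨S, T⟩ hST
    simp only [Finset.coe_product, Set.mem_prod, Finset.mem_coe, Finset.mem_filter,
      Finset.mem_powerset] at hST
    obtain ⟨⟨hSA, hS⟩, hTB, hT⟩ := hST
    simp only [Finset.coe_filter, Finset.mem_powerset, Set.mem_ofPred_eq]
    refine ⟨Finset.union_subset_union hSA hTB, ?_⟩
    rintro ⟨a, r, ha, hr, h1, h2, h3⟩
    have hsub := Finset.union_subset_union hSA hTB
    have memS : ∀ x ∈ S ∪ T, x ∈ A → x ∈ S := by
      intro x hx hxA
      rcases Finset.mem_union.1 hx with hx | hx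
      · exact hx
      · exact absurd (hTB hx) (Finset.disjoint_left.1 hd hxA)
    have memT : ∀ x ∈ S ∪ T, x ∈ B → x ∈ T := by
      intro x hx hxB
      rcases Finset.mem_union.1 hx with hx | hx
      · exact absurd hxB (Finset.disjoint_left.1 hd (hSA hx))
      · exact hx
    rcases h a r ha hr (hsub h1) (hsub h2) (hsub h3) with ⟨g1, g2, g3⟩ | ⟨g1, g2, g3⟩
    · exact hS ⟨a, r, ha, hr, memS _ h1 g1, memS _ h2 g2, memS _ h3 g3⟩
    · exact hT ⟨a, r, ha, hr, memT _ h1 g1, memT _ h2 g2, memT _ h3 g3⟩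
  · intro S hS
    simp only [Finset.coe_filter, Finset.mem_powerset, Set.mem_ofPred_eq] at hS
    simp only
    rw [← Finset.inter_union_distrib_left, Finset.inter_eq_left.2 hS.1]
  · rintro ⟨S, T⟩ hST
    simp only [Finset.coe_product, Set.mem_prod, Finset.mem_coe, Finset.mem_filter,
      Finset.mem_powerset] at hST
    obtain ⟨⟨hSA, hS⟩, hTB, hT⟩ := hST
    have e1 : T ∩ A = ∅ := Finset.disjoint_iff_inter_eq_empty.1
      (Finset.disjoint_of_subset_left hTB hd.symm)
    have e2 : S ∩ B = ∅ := Finset.disjoint_iff_inter_eq_empty.1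
      (Finset.disjoint_of_subset_left hSA hd)
    simp only [Finset.union_inter_distrib_right, e1, e2, Finset.inter_eq_left.2 hSA,
      Finset.inter_eq_left.2 hTB, Finset.union_empty, Finset.empty_union]

theorem GPFree_image_mul {m : ℕ} (hm : 0 < m) (S : Finset ℕ) :
    GPFree (S.image (m * ·)) ↔ GPFree S := by
  unfold GPFree
  rw [not_iff_not]
  constructor
  · rintro ⟨a, r, ha, hr, h1, h2, h3⟩
    simp only [Finset.mem_image] at h1 h2 h3
    obtain ⟨x, hx, rfl⟩ := h1
    obtain ⟨y, hy, hy'⟩ := h2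
    obtain ⟨z, hz, hz'⟩ := h3
    rw [mul_assoc] at hy' hz'
    have hy2 := Nat.eq_of_mul_eq_mul_left hm hy'
    have hz2 := Nat.eq_of_mul_eq_mul_left hm hz'
    exact ⟨x, r, Nat.pos_of_mul_pos_left ha, hr, hx, hy2 ▸ hy, hz2 ▸ hz⟩
  · rintro ⟨a, r, ha, hr, h1, h2, h3⟩
    refine ⟨m * a, r, by positivity, hr, Finset.mem_image_of_mem _ h1, ?_, ?_⟩
    · rw [mul_assoc]; exact Finset.mem_image_of_mem _ h2
    · rw [mul_assoc]; exact Finset.mem_image_of_mem _ h3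

theorem gpCount_image_mul {m : ℕ} (hm : 0 < m) (A : Finset ℕ) :
    gpCount (A.image (m * ·)) = gpCount A := by
  classical
  have hinj : Function.Injective (m * · : ℕ → ℕ) := fun x y hxy =>
    Nat.eq_of_mul_eq_mul_left hm hxy
  unfold gpCount
  symm
  refine Finset.card_nbij (fun S => S.image (m * ·)) ?_ ?_ ?_
  · intro S hS
    simp only [Finset.coe_filter, Finset.mem_powerset, Set.mem_ofPred_eq] at hS ⊢
    exact ⟨Finset.image_subset_image hS.1, (GPFree_image_mul hm S).2 hS.2⟩
  · intro S _ T _ hST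
    exact Finset.image_injective hinj hST
  · intro T hT
    simp only [Finset.coe_filter, Finset.mem_powerset, Set.mem_ofPred_eq] at hT
    obtain ⟨S, hS, rfl⟩ := Finset.subset_image_iff.1 hT.1
    refine ⟨S, ?_, rfl⟩
    simp only [Finset.coe_filter, Finset.mem_powerset, Set.mem_ofPred_eq]
    exact ⟨by exact_mod_cast hS, (GPFree_image_mul hm S).1 hT.2⟩

theorem log_gpCount_le {A B : Finset ℕ} (h : A ⊆ B) :
    Real.log (gpCount B) ≤ Real.log (gpCount A) + (B \ A).card := by
  have h1 : (gpCount B : ℝ) ≤ gpCount A * 2 ^ (B \ A).card := by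
    exact_mod_cast gpCount_le h
  have hA : (0 : ℝ) < gpCount A := by exact_mod_cast gpCount_pos A
  have hB : (0 : ℝ) < gpCount B := by exact_mod_cast gpCount_pos B
  have h2 := Real.log_le_log hB h1
  rw [Real.log_mul hA.ne' (by positivity), Real.log_pow] at h2
  have h3 : ((B \ A).card : ℝ) * Real.log 2 ≤ (B \ A).card * 1 :=
    mul_le_mul_of_nonneg_left (by linarith [Real.log_two_lt_d9]) (by positivity)
  linarith

theorem log_gpCount_mono {A B : Finset ℕ} (h : A ⊆ B) :
    Real.log (gpCount A) ≤ Real.log (gpCount B) :=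
  Real.log_le_log (by exact_mod_cast gpCount_pos A) (by exact_mod_cast gpCount_mono h)

/-! ### Windows and the factorization over smooth classes -/

/-- The integers `j` with `n / Q < j ≤ n`, where `n / Q` is the real quotient; the condition is
written `n < j * Q`. -/
def window (Q n : ℕ) : Finset ℕ := (Finset.Icc 1 n).filter (fun j => n < j * Q)

theorem mem_window {Q n j : ℕ} : j ∈ window Q n ↔ 1 ≤ j ∧ j ≤ n ∧ n < j * Q := by
  simp [window, and_assoc]

open Classical in
/-- The elements of `window Q n` all of whose prime factors are at most `Q`. -/
noncomputable def smoothWindow (Q n : ℕ) : Finset ℕ :=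
  (window Q n).filter (fun j => j ∈ Nat.smoothNumbers (Q + 1))

theorem mem_smoothWindow {Q n j : ℕ} :
    j ∈ smoothWindow Q n ↔ (1 ≤ j ∧ j ≤ n ∧ n < j * Q) ∧ j ∈ Nat.smoothNumbers (Q + 1) := by
  simp [smoothWindow, mem_window]

/-- The increment of `log gpCount (smoothWindow Q ·)` at `s`. It vanishes at `s = 0`, where
`s - 1 = 0` in `ℕ`. -/
noncomputable def incr (Q s : ℕ) : ℝ :=
  Real.log (gpCount (smoothWindow Q s)) - Real.log (gpCount (smoothWindow Q (s - 1)))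

/-- Passing from `s - 1` to `s` the smooth window gains at most the element `s` and loses at most
the element `s / Q`. -/
theorem abs_incr_le {Q : ℕ} (hQ : 0 < Q) (s : ℕ) : |incr Q s| ≤ 1 := by
  classical
  set V := smoothWindow Q s
  set V' := smoothWindow Q (s - 1)
  have c1 : (V \ (V ∩ V')).card ≤ 1 := by
    refine Finset.card_le_one.2 ?_
    have : ∀ x ∈ V \ (V ∩ V'), x = s := by
      intro x hx
      simp only [Finset.sdiff_inter_self_left, Finset.mem_sdiff, V, V', mem_smoothWindow] at hx
      obtain ⟨⟨⟨a, b, c⟩, d⟩, e⟩ := hx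
      by_contra hne
      exact e ⟨⟨a, by omega, by omega⟩, d⟩
    intro a ha b hb
    rw [this a ha, this b hb]
  have c2 : (V' \ (V ∩ V')).card ≤ 1 := by
    refine Finset.card_le_one.2 ?_
    have : ∀ x ∈ V' \ (V ∩ V'), x * Q = s := by
      intro x hx
      simp only [Finset.sdiff_inter_self_right, Finset.mem_sdiff, V, V', mem_smoothWindow] at hx
      obtain ⟨⟨⟨a, b, c⟩, d⟩, e⟩ := hx
      by_contra hne
      exact e ⟨⟨a, by omega, by omega⟩, d⟩
    intro a ha b hb
    exact Nat.eq_of_mul_eq_mul_right hQ ((this a ha).trans (this b hb).symm)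
  have h1 := log_gpCount_le (A := V ∩ V') (B := V) Finset.inter_subset_left
  have h2 := log_gpCount_le (A := V ∩ V') (B := V') Finset.inter_subset_right
  have h3 := log_gpCount_mono (A := V ∩ V') (B := V) Finset.inter_subset_left
  have h4 := log_gpCount_mono (A := V ∩ V') (B := V') Finset.inter_subset_right
  have c1' : ((V \ (V ∩ V')).card : ℝ) ≤ 1 := by exact_mod_cast c1
  have c2' : ((V' \ (V ∩ V')).card : ℝ) ≤ 1 := by exact_mod_cast c2
  unfold incr
  rw [abs_le]
  constructor <;> linarith

theorem coprime_of_smooth_of_rough {Q m s : ℕ}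
    (hm : ∀ p : ℕ, p.Prime → p ∣ m → Q < p) (hs : s ∈ Nat.smoothNumbers (Q + 1)) :
    Nat.Coprime m s := by
  refine Nat.coprime_of_dvd fun p hp hpm hps => ?_
  have h1 := hm p hp hpm
  have h2 := Nat.mem_smoothNumbers'.1 hs p hp hps
  omega

/-- Splitting off the class of `m` from the window: a progression inside the window has ratio
below `Q`, so it cannot leave the class `{m * t : t smooth}`. -/
theorem gpCount_window_split {Q n m : ℕ} (hm0 : 0 < m)
    (hm : ∀ p : ℕ, p.Prime → p ∣ m → Q < p) (P : ℕ → Prop) [DecidablePred P]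
    (hP : ∀ j, P j ↔ ∃ t ∈ Nat.smoothNumbers (Q + 1), j = m * t) :
    gpCount (window Q n) =
      gpCount ((window Q n).filter P) * gpCount ((window Q n).filter (fun j => ¬ P j)) := by
  classical
  have hcl : ∀ a r : ℕ, 0 < r → r ≤ Q → (P (a * r) ↔ P a) := by
    intro a r hr hrQ
    have hrs : r ∈ Nat.smoothNumbers (Q + 1) := Nat.mem_smoothNumbers_of_lt hr (by omega)
    rw [hP, hP]
    constructor
    · rintro ⟨t, ht, hat⟩
      have hdvd : m ∣ a := (coprime_of_smooth_of_rough hm hrs).dvd_of_dvd_mul_right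
        ⟨t, hat⟩
      obtain ⟨b, rfl⟩ := hdvd
      refine ⟨b, ?_, rfl⟩
      rw [mul_assoc] at hat
      have := Nat.eq_of_mul_eq_mul_left hm0 hat
      exact Nat.mem_smoothNumbers_of_dvd ht ⟨r, this.symm⟩
    · rintro ⟨t, ht, rfl⟩
      exact ⟨t * r, Nat.mul_mem_smoothNumbers ht hrs, by ring⟩
  conv_lhs => rw [← Finset.filter_union_filter_not_eq P (window Q n)]
  refine gpCount_union (Finset.disjoint_filter_filter_not _ _ _) ?_
  rw [Finset.filter_union_filter_not_eq]
  intro a r ha hr h1 h2 h3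
  have hrQ : r ≤ Q := by
    have e1 := (mem_window.1 h1).2.2
    have e3 := (mem_window.1 h3).2.1
    have : r ^ 2 < Q := Nat.lt_of_mul_lt_mul_left (lt_of_le_of_lt e3 e1)
    nlinarith
  have i1 := hcl a r (by omega) hrQ
  have i2 := hcl (a * r) r (by omega) hrQ
  rw [show a * r * r = a * r ^ 2 by ring] at i2
  simp only [Finset.mem_filter]
  tauto

/-- The increment of `log gpCount (window Q ·)` at `m * s` only depends on the smooth part `s`. -/
theorem log_gpCount_window_sub {Q m s : ℕ} (hQ : 0 < Q) (hm0 : 0 < m)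
    (hm : ∀ p : ℕ, p.Prime → p ∣ m → Q < p) (hs : s ∈ Nat.smoothNumbers (Q + 1)) :
    Real.log (gpCount (window Q (m * s))) - Real.log (gpCount (window Q (m * s - 1)))
      = incr Q s := by
  classical
  have hs0 : 0 < s := Nat.pos_of_ne_zero (Nat.ne_zero_of_mem_smoothNumbers hs)
  have hms : 0 < m * s := Nat.mul_pos hm0 hs0
  let P : ℕ → Prop := fun j => ∃ t ∈ Nat.smoothNumbers (Q + 1), j = m * t
  have key1 := gpCount_window_split (n := m * s) hm0 hm P (fun j => Iff.rfl)
  have key2 := gpCount_window_split (n := m * s - 1) hm0 hm P (fun j => Iff.rfl)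
  -- the two windows differ at most by the elements `m * s` and `m * s / Q` of the class of `m`
  have hrest : (window Q (m * s)).filter (fun j => ¬ P j)
      = (window Q (m * s - 1)).filter (fun j => ¬ P j) := by
    ext j
    simp only [Finset.mem_filter, mem_window]
    refine and_congr_left fun hj => ?_
    have n1 : j ≠ m * s := fun h => hj ⟨s, hs, h⟩
    have n2 : j * Q ≠ m * s := by
      intro h
      have hQs : Q ∈ Nat.smoothNumbers (Q + 1) := Nat.mem_smoothNumbers_of_lt hQ (by omega)
      obtain ⟨b, rfl⟩ := (coprime_of_smooth_of_rough hm hQs).dvd_of_dvd_mul_right ⟨s, h⟩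
      rw [mul_assoc] at h
      have := Nat.eq_of_mul_eq_mul_left hm0 h
      exact hj ⟨b, Nat.mem_smoothNumbers_of_dvd hs ⟨Q, this.symm⟩, rfl⟩
    omega
  have c1 : (window Q (m * s)).filter P = (smoothWindow Q s).image (m * ·) := by
    ext j
    simp only [Finset.mem_filter, mem_window, Finset.mem_image, mem_smoothWindow, P]
    constructor
    · rintro ⟨⟨h1, h2, h3⟩, t, ht, rfl⟩
      refine ⟨t, ⟨⟨Nat.pos_of_ne_zero (Nat.ne_zero_of_mem_smoothNumbers ht), ?_, ?_⟩, ht⟩, rfl⟩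
      · exact Nat.le_of_mul_le_mul_left h2 hm0
      · rw [mul_assoc] at h3
        exact Nat.lt_of_mul_lt_mul_left h3
    · rintro ⟨t, ⟨⟨h1, h2, h3⟩, ht⟩, rfl⟩
      refine ⟨⟨Nat.mul_pos hm0 h1, Nat.mul_le_mul_left m h2, ?_⟩, t, ht, rfl⟩
      rw [mul_assoc]
      exact Nat.mul_lt_mul_of_pos_left h3 hm0
  have c2 : (window Q (m * s - 1)).filter P = (smoothWindow Q (s - 1)).image (m * ·) := by
    ext j
    simp only [Finset.mem_filter, mem_window, Finset.mem_image, mem_smoothWindow, P]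
    constructor
    · rintro ⟨⟨h1, h2, h3⟩, t, ht, rfl⟩
      refine ⟨t, ⟨⟨Nat.pos_of_ne_zero (Nat.ne_zero_of_mem_smoothNumbers ht), ?_, ?_⟩, ht⟩, rfl⟩
      · have : m * t < m * s := by omega
        have := Nat.lt_of_mul_lt_mul_left this
        omega
      · rw [mul_assoc] at h3
        have : m * s ≤ m * (t * Q) := by omega
        have := Nat.le_of_mul_le_mul_left this hm0
        omega
    · rintro ⟨t, ⟨⟨h1, h2, h3⟩, ht⟩, rfl⟩
      have e1 : m * t < m * s := Nat.mul_lt_mul_of_pos_left (by omega) hm0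
      have e2 : m * s ≤ m * (t * Q) := Nat.mul_le_mul_left m (by omega)
      refine ⟨⟨Nat.mul_pos hm0 h1, by omega, ?_⟩, t, ht, rfl⟩
      rw [mul_assoc]
      omega
  rw [c1, gpCount_image_mul hm0] at key1
  rw [c2, gpCount_image_mul hm0, ← hrest] at key2
  rw [key1, key2]
  push_cast
  have p1 := gpCount_pos (smoothWindow Q s)
  have p2 := gpCount_pos (smoothWindow Q (s - 1))
  have p3 := gpCount_pos ((window Q (m * s)).filter (fun j => ¬ P j))
  rw [Real.log_mul (by positivity) (by positivity), Real.log_mul (by positivity) (by positivity)]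
  unfold incr
  ring

theorem abs_log_H_sub_window {Q : ℕ} (hQ : 0 < Q) (n : ℕ) :
    |Real.log (H n) - Real.log (gpCount (window Q n))| ≤ n / Q := by
  classical
  rw [H_eq_gpCount]
  have hsub : window Q n ⊆ Finset.Icc 1 n := Finset.filter_subset _ _
  have h1 := log_gpCount_mono hsub
  have h2 := log_gpCount_le hsub
  have h3 : (Finset.Icc 1 n \ window Q n).card ≤ n / Q := by
    calc _ ≤ (Finset.Icc 1 (n / Q)).card := by
          refine Finset.card_le_card fun j hj => ?_
          simp only [Finset.mem_sdiff, Finset.mem_Icc, mem_window] at hj ⊢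
          refine ⟨hj.1.1, (Nat.le_div_iff_mul_le hQ).2 ?_⟩
          by_contra hc
          exact hj.2 ⟨hj.1.1, hj.1.2, by omega⟩
      _ = n / Q := by simp
  have h4 : ((Finset.Icc 1 n \ window Q n).card : ℝ) ≤ n / Q :=
    le_trans (by exact_mod_cast h3) Nat.cast_div_le
  rw [abs_le]
  constructor <;> linarith

/-- Every subset of `(n / 4, n]` is GP-free, since `a * r ^ 2 ≥ 4 * a`. -/
theorem log_H_ge (n : ℕ) : (n : ℝ) / 2 ≤ Real.log (H n) := by
  classical
  have hall : ∀ S ∈ (window 4 n).powerset, GPFree S := by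
    intro S hS
    rintro ⟨a, r, ha, hr, h1, h2, h3⟩
    have hS := Finset.mem_powerset.1 hS
    have e1 := (mem_window.1 (hS h1)).2.2
    have e3 := (mem_window.1 (hS h3)).2.1
    have : r ^ 2 < 4 := Nat.lt_of_mul_lt_mul_left (lt_of_le_of_lt e3 e1)
    nlinarith
  have h1 : gpCount (window 4 n) = 2 ^ (window 4 n).card := by
    unfold gpCount
    rw [Finset.filter_true_of_mem hall, Finset.card_powerset]
  have h2 : 3 * n ≤ 4 * (window 4 n).card := by
    have : window 4 n = Finset.Ioc (n / 4) n := by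
      ext j
      simp only [mem_window, Finset.mem_Ioc]
      omega
    rw [this, Nat.card_Ioc]
    omega
  have h2' : (3 : ℝ) * n ≤ 4 * (window 4 n).card := by exact_mod_cast h2
  have h3 : Real.log (gpCount (window 4 n)) ≤ Real.log (H n) := by
    rw [H_eq_gpCount]
    exact log_gpCount_mono (Finset.filter_subset _ _)
  rw [h1] at h3
  push_cast at h3
  rw [Real.log_pow] at h3
  have := Real.log_two_gt_d9
  nlinarith

/-- Factorization of a positive integer into a `Q`-rough and a `Q`-smooth part. -/
theorem exists_rough_mul_smooth (Q k : ℕ) (hk : k ≠ 0) :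
    ∃ m s : ℕ, k = m * s ∧ 0 < m ∧ (∀ p : ℕ, p.Prime → p ∣ m → Q < p) ∧
      s ∈ Nat.smoothNumbers (Q + 1) := by
  induction k using induction_on_primes with
  | zero => exact absurd rfl hk
  | one =>
    refine ⟨1, 1, rfl, one_pos, fun p hp h => ?_, Nat.mem_smoothNumbers'.2 fun p hp h => ?_⟩
    · exact absurd (Nat.dvd_one.1 h) hp.one_lt.ne'
    · exact absurd (Nat.dvd_one.1 h) hp.one_lt.ne'
  | prime_mul q a hq ih =>
    obtain ⟨m, s, h, hm0, hm, hs⟩ := ih (by rintro rfl; simp at hk)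
    by_cases hqQ : q ≤ Q
    · refine ⟨m, q * s, by rw [h]; ring, hm0, hm, Nat.mul_mem_smoothNumbers
        (Nat.mem_smoothNumbers_of_lt hq.pos (by omega)) hs⟩
    · refine ⟨q * m, s, by rw [h]; ring, Nat.mul_pos hq.pos hm0, fun p hp hpm => ?_, hs⟩
      rcases (Nat.Prime.dvd_mul hp).1 hpm with h1 | h1
      · rw [(Nat.prime_dvd_prime_iff_eq hp hq).1 h1]; omega
      · exact hm p hp h1

/-! ### Möbius inversion of the increments -/

/-- Möbius inverse of `incr Q`. -/
noncomputable def mobIncr (Q j : ℕ) : ℝ :=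
  ∑ x ∈ j.divisorsAntidiagonal, (ArithmeticFunction.moebius x.1 : ℝ) * incr Q x.2

theorem sum_mobIncr (Q : ℕ) {n : ℕ} (hn : 0 < n) :
    ∑ i ∈ n.divisors, mobIncr Q i = incr Q n :=
  (ArithmeticFunction.sum_eq_iff_sum_mul_moebius_eq (f := mobIncr Q) (g := incr Q)).2
    (fun _ _ => rfl) n hn

theorem abs_mobIncr_le {Q : ℕ} (hQ : 0 < Q) (j : ℕ) : |mobIncr Q j| ≤ j.divisors.card := by
  unfold mobIncr
  refine (Finset.abs_sum_le_sum_abs _ _).trans ?_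
  refine (Finset.sum_le_card_nsmul _ _ 1 fun x _ => ?_).trans ?_
  · rw [abs_mul]
    refine mul_le_one₀ ?_ (abs_nonneg _) (abs_incr_le hQ _)
    exact_mod_cast ArithmeticFunction.abs_moebius_le_one
  · rw [nsmul_eq_mul, mul_one, ← Nat.map_div_right_divisors, Finset.card_map]

open Classical in
/-- `mobIncr Q` restricted to the `Q`-smooth numbers, as an arithmetic function. -/
noncomputable def smoothCoeff (Q : ℕ) : ArithmeticFunction ℝ :=
  ⟨fun j => if j ∈ Nat.smoothNumbers (Q + 1) then mobIncr Q j else 0, by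
    simp [Nat.mem_smoothNumbers]⟩

theorem smoothCoeff_apply_of_mem {Q j : ℕ} (h : j ∈ Nat.smoothNumbers (Q + 1)) :
    smoothCoeff Q j = mobIncr Q j := if_pos h

theorem smoothCoeff_apply_of_notMem {Q j : ℕ} (h : j ∉ Nat.smoothNumbers (Q + 1)) :
    smoothCoeff Q j = 0 := if_neg h

/-- The convolution of `smoothCoeff Q` with `1` is the increment of the window count. -/
theorem smoothCoeff_mul_zeta {Q : ℕ} (hQ : 0 < Q) {k : ℕ} (hk : k ≠ 0) :
    (smoothCoeff Q * (ArithmeticFunction.zeta : ArithmeticFunction ℝ)) k =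
      Real.log (gpCount (window Q k)) - Real.log (gpCount (window Q (k - 1))) := by
  classical
  obtain ⟨m, s, rfl, hm0, hm, hs⟩ := exists_rough_mul_smooth Q k hk
  have hs0 : 0 < s := Nat.pos_of_ne_zero (Nat.ne_zero_of_mem_smoothNumbers hs)
  rw [log_gpCount_window_sub hQ hm0 hm hs, ArithmeticFunction.coe_mul_zeta_apply,
    ← sum_mobIncr Q hs0]
  symm
  rw [Finset.sum_congr rfl fun j hj => (smoothCoeff_apply_of_mem
    (Nat.mem_smoothNumbers_of_dvd hs (Nat.dvd_of_mem_divisors hj))).symm]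
  refine Finset.sum_subset (Nat.divisors_subset_of_dvd hk (Dvd.intro_left m rfl)) ?_
  intro j hj hjs
  refine smoothCoeff_apply_of_notMem fun hsm => hjs ?_
  refine Nat.mem_divisors.2 ⟨?_, hs0.ne'⟩
  exact (coprime_of_smooth_of_rough hm hsm).symm.dvd_of_dvd_mul_left (Nat.dvd_of_mem_divisors hj)

theorem log_window_eq_sum {Q : ℕ} (hQ : 0 < Q) (n : ℕ) :
    Real.log (gpCount (window Q n)) =
      ∑ j ∈ Finset.Ioc 0 n, smoothCoeff Q j * ((n / j : ℕ) : ℝ) := by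
  rw [← ArithmeticFunction.sum_Ioc_mul_zeta_eq_sum]
  induction n with
  | zero =>
    have : window Q 0 = ∅ := by
      ext j; simp only [mem_window, Finset.notMem_empty, iff_false]; omega
    rw [this]
    have : gpCount ∅ = 1 := by
      classical
      simp [gpCount, Finset.filter_singleton, GPFree]
    simp [this]
  | succ n ih =>
    rw [Finset.sum_Ioc_succ_top (Nat.zero_le n), ← ih, smoothCoeff_mul_zeta hQ (by omega)]
    simp

/-! ### Rankin's bound for the error term -/

/-- `1 / (1 - x)^2 ≤ exp (8 x)` for `0 ≤ x ≤ 1 / √2`. -/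
theorem one_div_one_sub_sq_le {x : ℝ} (h0 : 0 ≤ x) (h1 : x ^ 2 ≤ 1 / 2) :
    1 / (1 - x) ^ 2 ≤ Real.exp (8 * x) := by
  have hx : x ≤ 3 / 4 := by nlinarith
  have h2 := Real.quadratic_le_exp_of_nonneg (x := 4 * x) (by positivity)
  have h3 : 1 ≤ (1 - x) * Real.exp (4 * x) := by
    have : (1 - x) * (1 + 4 * x + (4 * x) ^ 2 / 2) ≤ (1 - x) * Real.exp (4 * x) :=
      mul_le_mul_of_nonneg_left h2 (by linarith)
    have h4 : 0 ≤ x * (3 + 4 * x - 8 * x ^ 2) := mul_nonneg h0 (by nlinarith)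
    nlinarith
  have h5 : Real.exp (8 * x) = Real.exp (4 * x) ^ 2 := by
    rw [← Real.exp_nat_mul]; congr 1; push_cast; ring
  rw [div_le_iff₀ (by have : 0 < 1 - x := by linarith
                      positivity), h5, ← mul_pow, mul_comm]
  exact one_le_pow₀ h3

/-- The Dirichlet series of the divisor function over smooth numbers, bounded by its Euler
product. -/
theorem smooth_divisor_series (Q : ℕ) {σ : ℝ} (hσ : 1 / 2 ≤ σ) :
    Summable (fun j : Nat.smoothNumbers (Q + 1) =>
      ((j : ℕ).divisors.card : ℝ) * ((j : ℕ) : ℝ) ^ (-σ)) ∧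
    ∑' j : Nat.smoothNumbers (Q + 1), ((j : ℕ).divisors.card : ℝ) * ((j : ℕ) : ℝ) ^ (-σ)
      ≤ Real.exp (8 * ∑ p ∈ Nat.primesLE Q, (p : ℝ) ^ (-σ)) := by
  set f : ℕ → ℝ := fun j => (j.divisors.card : ℝ) * (j : ℝ) ^ (-σ) with hf
  have hx : ∀ p : ℕ, p.Prime → 0 ≤ (p : ℝ) ^ (-σ) ∧ ((p : ℝ) ^ (-σ)) ^ 2 ≤ 1 / 2 := by
    intro p hp
    have hp2 : (2 : ℝ) ≤ p := by exact_mod_cast hp.two_le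
    refine ⟨by positivity, ?_⟩
    rw [← Real.rpow_natCast, ← Real.rpow_mul (by positivity)]
    calc (p : ℝ) ^ (-σ * ((2 : ℕ) : ℝ)) ≤ (p : ℝ) ^ (-1 : ℝ) :=
          Real.rpow_le_rpow_of_exponent_le (by linarith) (by push_cast; linarith)
      _ = (p : ℝ)⁻¹ := Real.rpow_neg_one _
      _ ≤ 1 / 2 := by rw [one_div]; exact inv_anti₀ (by norm_num) hp2
  have hpow : ∀ p : ℕ, p.Prime → ∀ e : ℕ,
      f (p ^ e) = ((e + 1).choose 1 : ℕ) * ((p : ℝ) ^ (-σ)) ^ e := by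
    intro p hp e
    simp only [hf]
    rw [Nat.divisors_prime_pow hp, Finset.card_map, Finset.card_range, Nat.choose_one_right]
    congr 1
    push_cast
    rw [← Real.rpow_natCast, ← Real.rpow_natCast, ← Real.rpow_mul (by positivity),
      ← Real.rpow_mul (by positivity), mul_comm]
  have hnorm : ∀ p : ℕ, p.Prime → ‖(p : ℝ) ^ (-σ)‖ < 1 := by
    intro p hp
    obtain ⟨h0, h1⟩ := hx p hp
    rw [Real.norm_of_nonneg h0]
    nlinarith
  have hnn : ∀ j, 0 ≤ f j := fun j => by simp only [hf]; positivity
  have hs : ∀ p : ℕ, p.Prime → HasSum (fun e => f (p ^ e)) (1 / (1 - (p : ℝ) ^ (-σ)) ^ 2) := by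
    intro p hp
    have := hasSum_choose_mul_geometric_of_norm_lt_one 1 (hnorm p hp)
    simp only [hpow p hp]
    exact this
  have hE := EulerProduct.summable_and_hasSum_smoothNumbers_prod_primesBelow_tsum (f := f)
    (by simp [hf]) (fun {m n} hmn => by
      simp only [hf]
      rw [Nat.Coprime.card_divisors_mul hmn]
      push_cast
      rw [Real.mul_rpow (by positivity) (by positivity)]
      ring)
    (fun {p} hp => by
      simp only [Real.norm_of_nonneg (hnn _)]
      exact (hs p hp).summable) (Q + 1)
  refine ⟨hE.2.summable, ?_⟩
  rw [hE.2.tsum_eq, Finset.mul_sum, Real.exp_sum]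
  refine Finset.prod_le_prod (fun p _ => tsum_nonneg fun e => hnn _) fun p hp => ?_
  have hp' : p.Prime := Nat.prime_of_mem_primesBelow hp
  rw [(hs p hp').tsum_eq]
  exact one_div_one_sub_sq_le (hx p hp').1 (hx p hp').2

/-- Rankin's device: the rounding error of `x` is at most `x ^ σ`. -/
theorem abs_floor_sub_le_rpow {n j : ℕ} {σ : ℝ} (h0 : 0 < σ) (h1 : σ < 1) :
    |((n / j : ℕ) : ℝ) - (n : ℝ) / j| ≤ ((n : ℝ) / j) ^ σ := by
  set x : ℝ := (n : ℝ) / j with hx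
  have hx0 : 0 ≤ x := by positivity
  rw [← Nat.floor_div_eq_div (K := ℝ), ← hx, abs_sub_comm]
  have hfl := Nat.floor_le hx0
  have hlt := Nat.lt_floor_add_one x
  rw [abs_of_nonneg (by linarith)]
  rcases le_or_gt 1 x with h | h
  · have := Real.one_le_rpow h h0.le
    linarith
  · have h2 : x ≤ x ^ σ := by
      rcases hx0.eq_or_lt with h3 | h3
      · rw [← h3, Real.zero_rpow h0.ne']
      · conv_lhs => rw [← Real.rpow_one x]
        exact Real.rpow_le_rpow_of_exponent_ge h3 h.le h1.le
    have : (0 : ℝ) ≤ ⌊x⌋₊ := by positivity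
    linarith

/-- The limit of `log gpCount (window Q n) / n`. The term `j = 0` is zero, and the series converges
absolutely for `Q ≥ 1`. -/
noncomputable def windowRate (Q : ℕ) : ℝ := ∑' j : ℕ, smoothCoeff Q j / j

theorem abs_log_window_sub_le {Q : ℕ} (hQ : 0 < Q) {σ : ℝ} (hσ : 1 / 2 ≤ σ) (hσ1 : σ < 1)
    (n : ℕ) :
    |Real.log (gpCount (window Q n)) - n * windowRate Q| ≤
      (n : ℝ) ^ σ * Real.exp (8 * ∑ p ∈ Nat.primesLE Q, (p : ℝ) ^ (-σ)) := by
  obtain ⟨hsum, hle⟩ := smooth_divisor_series Q hσ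
  set S : Set ℕ := Nat.smoothNumbers (Q + 1) with hS
  set w : ℕ → ℝ := S.indicator (fun j => (j.divisors.card : ℝ) * (j : ℝ) ^ (-σ)) with hw
  have hwsum : Summable w := summable_subtype_iff_indicator.1 hsum
  have hwt : ∑' j, w j = ∑' j : S, ((j : ℕ).divisors.card : ℝ) * ((j : ℕ) : ℝ) ^ (-σ) :=
    (tsum_subtype S _).symm
  rw [← hwt] at hle
  have hterm : ∀ j : ℕ, |smoothCoeff Q j * (((n / j : ℕ) : ℝ) - (n : ℝ) / j)|
      ≤ (n : ℝ) ^ σ * w j := by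
    intro j
    by_cases hj : j ∈ S
    · rw [smoothCoeff_apply_of_mem hj, hw, Set.indicator_of_mem hj, abs_mul]
      calc |mobIncr Q j| * |((n / j : ℕ) : ℝ) - (n : ℝ) / j|
          ≤ j.divisors.card * ((n : ℝ) / j) ^ σ :=
            mul_le_mul (abs_mobIncr_le hQ j) (abs_floor_sub_le_rpow (by linarith) hσ1)
              (abs_nonneg _) (by positivity)
        _ = _ := by
            rw [Real.div_rpow (by positivity) (by positivity), Real.rpow_neg (by positivity)]
            ring
    · rw [smoothCoeff_apply_of_notMem hj, hw, Set.indicator_of_notMem hj]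
      simp
  have hcsum : Summable (fun j : ℕ => smoothCoeff Q j / j) := by
    refine Summable.of_norm_bounded hwsum fun j => ?_
    by_cases hj : j ∈ S
    · have hj0 : (1 : ℝ) ≤ j := by
        exact_mod_cast Nat.one_le_iff_ne_zero.2 (Nat.ne_zero_of_mem_smoothNumbers hj)
      rw [smoothCoeff_apply_of_mem hj, hw, Set.indicator_of_mem hj, norm_div, Real.norm_eq_abs,
        Real.norm_of_nonneg (by positivity), div_eq_mul_inv]
      refine mul_le_mul (abs_mobIncr_le hQ j) ?_ (by positivity) (by positivity)
      rw [← Real.rpow_neg_one]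
      exact Real.rpow_le_rpow_of_exponent_le hj0 (by linarith)
    · rw [smoothCoeff_apply_of_notMem hj, hw, Set.indicator_of_notMem hj]
      simp
  have h1 : Real.log (gpCount (window Q n)) =
      ∑' j : ℕ, smoothCoeff Q j * ((n / j : ℕ) : ℝ) := by
    rw [log_window_eq_sum hQ, tsum_eq_sum]
    intro j hj
    have : j = 0 ∨ n < j := by
      simp only [Finset.mem_Ioc] at hj; omega
    rcases this with rfl | h
    · simp
    · rw [Nat.div_eq_of_lt h]; simp
  have hfin : Summable (fun j : ℕ => smoothCoeff Q j * ((n / j : ℕ) : ℝ)) := by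
    refine summable_of_ne_finset_zero (s := Finset.Ioc 0 n) fun j hj => ?_
    have : j = 0 ∨ n < j := by
      simp only [Finset.mem_Ioc] at hj; omega
    rcases this with rfl | h
    · simp
    · rw [Nat.div_eq_of_lt h]; simp
  have h2 : Real.log (gpCount (window Q n)) - n * windowRate Q =
      ∑' j : ℕ, smoothCoeff Q j * (((n / j : ℕ) : ℝ) - (n : ℝ) / j) := by
    rw [h1, windowRate, ← tsum_mul_left, ← hfin.tsum_sub (hcsum.mul_left (n : ℝ))]
    refine tsum_congr fun j => ?_
    ring
  rw [h2, ← Real.norm_eq_abs]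
  refine (tsum_of_norm_bounded (hwsum.mul_left ((n : ℝ) ^ σ)).hasSum hterm).trans ?_
  rw [tsum_mul_left]
  exact mul_le_mul_of_nonneg_left hle (by positivity)

/-! ### The sum of reciprocals of primes -/

/-- Chebyshev's bound on a dyadic block of primes. -/
theorem sum_inv_primes_block {j : ℕ} (hj : 1 ≤ j) :
    ∑ p ∈ Nat.primesLE (2 ^ (j + 1)) \ Nat.primesLE (2 ^ j), (p : ℝ)⁻¹ ≤ 4 * (j : ℝ)⁻¹ := by
  set D := Nat.primesLE (2 ^ (j + 1)) \ Nat.primesLE (2 ^ j) with hD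
  have hj0 : (0 : ℝ) < j := by exact_mod_cast hj
  have hmem : ∀ p ∈ D, (2 : ℝ) ^ j ≤ p := by
    intro p hp
    simp only [hD, Finset.mem_sdiff, Nat.mem_primesLE, not_and] at hp
    have : 2 ^ j ≤ p := by
      by_contra hc
      exact hp.2 (by omega) hp.1.2
    exact_mod_cast this
  have hcard : (D.card : ℝ) * (j * Real.log 2) ≤ Real.log 4 * 2 ^ (j + 1) := by
    calc (D.card : ℝ) * (j * Real.log 2) ≤ ∑ p ∈ D, Real.log p := by
          rw [← nsmul_eq_mul]
          refine Finset.card_nsmul_le_sum _ _ _ fun p hp => ?_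
          rw [← Real.log_pow]
          exact Real.log_le_log (by positivity) (hmem p hp)
      _ ≤ ∑ p ∈ Nat.primesLE (2 ^ (j + 1)), Real.log p :=
          Finset.sum_le_sum_of_subset_of_nonneg Finset.sdiff_subset
            fun p _ _ => Real.log_natCast_nonneg p
      _ = Chebyshev.theta ((2 ^ (j + 1) : ℕ) : ℝ) := (Chebyshev.theta_eq_sum_primesLE_log _).symm
      _ ≤ Real.log 4 * ((2 ^ (j + 1) : ℕ) : ℝ) := Chebyshev.theta_le_log4_mul_x (by positivity)
      _ = _ := by push_cast; ring
  have hlog4 : Real.log 4 = 2 * Real.log 2 := by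
    rw [show (4 : ℝ) = 2 ^ 2 by norm_num, Real.log_pow]; norm_num
  have hl2 : 0 < Real.log 2 := Real.log_pos (by norm_num)
  have hcard' : (D.card : ℝ) * j ≤ 4 * 2 ^ j := by
    rw [hlog4, pow_succ] at hcard
    have : ((D.card : ℝ) * j) * Real.log 2 ≤ (4 * 2 ^ j) * Real.log 2 := by linarith
    exact le_of_mul_le_mul_right this hl2
  calc ∑ p ∈ D, (p : ℝ)⁻¹ ≤ ∑ p ∈ D, ((2 : ℝ) ^ j)⁻¹ :=
        Finset.sum_le_sum fun p hp => inv_anti₀ (by positivity) (hmem p hp)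
    _ = D.card * ((2 : ℝ) ^ j)⁻¹ := by rw [Finset.sum_const, nsmul_eq_mul]
    _ ≤ 4 * (j : ℝ)⁻¹ := by
        rw [← div_eq_mul_inv, ← div_eq_mul_inv, div_le_div_iff₀ (by positivity) hj0]
        linarith

/-- A weak form of Mertens' second theorem. -/
theorem sum_inv_primes_le (J : ℕ) :
    ∑ p ∈ Nat.primesLE (2 ^ (J + 1)), (p : ℝ)⁻¹ ≤ 5 + 4 * Real.log J := by
  have h : ∑ p ∈ Nat.primesLE (2 ^ (J + 1)), (p : ℝ)⁻¹ ≤ 1 + 4 * (harmonic J : ℝ) := by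
    induction J with
    | zero =>
      have : Nat.primesLE (2 ^ (0 + 1)) = {2} := by decide
      rw [this]; simp; norm_num
    | succ J ih =>
      have hsub : Nat.primesLE (2 ^ (J + 1)) ⊆ Nat.primesLE (2 ^ (J + 1 + 1)) :=
        Nat.primesLE_mono (Nat.pow_le_pow_right (by norm_num) (by omega))
      rw [← Finset.sum_sdiff hsub, harmonic_succ]
      have := sum_inv_primes_block (j := J + 1) (by omega)
      push_cast at this ⊢
      linarith
  have := harmonic_le_one_add_log J
  linarith

/-! ### The exponential rate of `H` -/

/-- The central estimate, valid for all cut-offs `Q` and all `σ` in `[1 / 2, 1)`. -/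
theorem abs_log_H_sub_le {Q : ℕ} (hQ : 0 < Q) {σ : ℝ} (hσ : 1 / 2 ≤ σ) (hσ1 : σ < 1) (n : ℕ) :
    |Real.log (H n) - n * windowRate Q| ≤
      n / Q + (n : ℝ) ^ σ * Real.exp (8 * ∑ p ∈ Nat.primesLE Q, (p : ℝ) ^ (-σ)) :=
  (abs_sub_le _ (Real.log (gpCount (window Q n))) _).trans
    (add_le_add (abs_log_H_sub_window hQ n) (abs_log_window_sub_le hQ hσ hσ1 n))

theorem exists_rate_bound {Q : ℕ} (hQ : 0 < Q) :
    ∃ e : ℕ → ℝ, Filter.Tendsto e Filter.atTop (nhds 0) ∧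
      ∀ n : ℕ, 0 < n → |Real.log (H n) / n - windowRate Q| ≤ (Q : ℝ)⁻¹ + e n := by
  set K := Real.exp (8 * ∑ p ∈ Nat.primesLE Q, (p : ℝ) ^ (-(1 / 2 : ℝ))) with hK
  refine ⟨fun n : ℕ => (n : ℝ) ^ (-(1 / 2 : ℝ)) * K, ?_, fun n hn => ?_⟩
  · have := (tendsto_rpow_neg_atTop (y := 1 / 2) (by norm_num)).comp tendsto_natCast_atTop_atTop
    simpa using this.mul_const K
  · have hn0 : (0 : ℝ) < n := by exact_mod_cast hn
    have h := abs_log_H_sub_le hQ (σ := 1 / 2) le_rfl (by norm_num) n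
    rw [← hK] at h
    have e1 : Real.log (H n) / n - windowRate Q = (Real.log (H n) - n * windowRate Q) / n := by
      field_simp
    rw [e1, abs_div, abs_of_pos hn0, div_le_iff₀ hn0]
    refine h.trans (le_of_eq ?_)
    have e2 : (n : ℝ) ^ (1 / 2 : ℝ) = (n : ℝ) ^ (-(1 / 2 : ℝ)) * n := by
      rw [← Real.rpow_add_one hn0.ne']; norm_num
    rw [e2]; ring

/-- The exponential rate of `H` exists and is within `1 / Q` of `windowRate Q` for every `Q`. -/
theorem exists_rate : ∃ Θ : ℝ,
    Filter.Tendsto (fun n : ℕ => Real.log (H n) / n) Filter.atTop (nhds Θ) ∧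
    ∀ Q : ℕ, 0 < Q → |Θ - windowRate Q| ≤ (Q : ℝ)⁻¹ := by
  have hC : CauchySeq (fun n : ℕ => Real.log (H n) / n) := by
    refine Metric.cauchySeq_iff'.2 fun ε hε => ?_
    obtain ⟨Q, hQ⟩ := exists_nat_gt (4 / ε)
    have hQ0 : (0 : ℝ) < Q := lt_trans (by positivity) hQ
    obtain ⟨e, he, hb⟩ := exists_rate_bound (Q := Q) (by exact_mod_cast hQ0)
    have hQε : (Q : ℝ)⁻¹ < ε / 4 := by
      rw [inv_lt_comm₀ hQ0 (by positivity), inv_div]; exact hQ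
    obtain ⟨N, hN⟩ := Filter.eventually_atTop.1
      (he.eventually_lt_const (show (0 : ℝ) < ε / 4 by positivity))
    refine ⟨N + 1, fun n hn => ?_⟩
    have b1 := hb n (by omega)
    have b2 := hb (N + 1) (by omega)
    have b3 := hN n (by omega)
    have b4 := hN (N + 1) (by omega)
    rw [Real.dist_eq]
    rw [abs_le] at b1 b2
    rw [abs_lt]
    constructor <;> linarith
  obtain ⟨Θ, hΘ⟩ := cauchySeq_tendsto_of_complete hC
  refine ⟨Θ, hΘ, fun Q hQ => ?_⟩
  obtain ⟨e, he, hb⟩ := exists_rate_bound hQ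
  have h1 := (hΘ.sub_const (windowRate Q)).abs
  have h2 := he.const_add (Q : ℝ)⁻¹
  rw [add_zero] at h2
  refine le_of_tendsto_of_tendsto h1 h2 ?_
  filter_upwards [Filter.eventually_gt_atTop 0] with n hn
  exact hb n hn

/-! ### Choice of the parameters -/

/-- In terms of `v = log log n` and `T = √(c · log n · log log n)`, eight times
the exponent contributed by the Euler product is at most `T`. -/
theorem eventually_exponent_small {c : ℝ} (hc : 0 < c) :
    ∀ᶠ v : ℝ in Filter.atTop, 4 ≤ v ∧
      64 * (Real.exp (v / 4) * (5 + 4 * v)) ≤ Real.sqrt (c * Real.exp v * v) := by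
  have h1 : Filter.Tendsto (fun v : ℝ => v / 4) Filter.atTop Filter.atTop :=
    Filter.tendsto_id.atTop_div_const (by norm_num)
  have h2 := (Real.tendsto_exp_div_pow_atTop 1).comp h1
  filter_upwards [Filter.eventually_ge_atTop 4,
    h2.eventually_ge_atTop (1536 / Real.sqrt c)] with v hv hv2
  have hs : 0 < Real.sqrt c := Real.sqrt_pos.2 hc
  refine ⟨hv, ?_⟩
  have h3 : 384 * v ≤ Real.sqrt c * Real.exp (v / 4) := by
    simp only [Function.comp, pow_one] at hv2
    rw [div_le_div_iff₀ hs (by linarith)] at hv2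
    linarith
  have hee : Real.exp (v / 4) * Real.exp (v / 4) * (Real.exp (v / 4) * Real.exp (v / 4))
      = Real.exp v := by
    rw [← Real.exp_add, ← Real.exp_add]; congr 1; ring
  have hE : 0 < Real.exp (v / 4) := Real.exp_pos _
  calc 64 * (Real.exp (v / 4) * (5 + 4 * v)) ≤ Real.exp (v / 4) * (384 * v) := by nlinarith
    _ ≤ Real.exp (v / 4) * (Real.sqrt c * Real.exp (v / 4)) :=
        mul_le_mul_of_nonneg_left h3 hE.le
    _ ≤ Real.sqrt (c * Real.exp v * v) := by
        refine Real.le_sqrt_of_sq_le ?_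
        have : (Real.exp (v / 4) * (Real.sqrt c * Real.exp (v / 4))) ^ 2 = c * Real.exp v := by
          rw [← hee]
          linear_combination (Real.exp (v / 4)) ^ 4 * Real.sq_sqrt hc.le
        rw [this]
        have : 0 < c * Real.exp v := by positivity
        nlinarith

/-- In terms of `v = log log n` and `T = √(c log n log log n)`, the parameters `Q ≈ exp T` and
`σ = 1 - v / (4 (T + 1))`, for which `Q ^ (1 - σ) ≤ (log n) ^ (1/4)`, make the error term of `abs_log_H_sub_le` at most
`2 n exp (-T)`. -/
theorem exists_good_Q {c v T : ℝ} {n : ℕ} (hc : 0 < c) (hc6 : c < 1 / 6)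
    (hn : 0 < n) (hlog : Real.log n = Real.exp v) (hT : T = Real.sqrt (c * Real.exp v * v))
    (hv : 4 ≤ v) (hX : 64 * (Real.exp (v / 4) * (5 + 4 * v)) ≤ T) :
    ∃ Q : ℕ, 0 < Q ∧ (Q : ℝ)⁻¹ ≤ Real.exp (-T) ∧
      |Real.log (H n) - n * windowRate Q| ≤ 2 * n * Real.exp (-T) := by
  have hn0 : (0 : ℝ) < n := by exact_mod_cast hn
  have hTsq : T ^ 2 = c * Real.exp v * v := by
    rw [hT]; exact Real.sq_sqrt (by positivity)
  have he1 : 1 ≤ Real.exp (v / 4) := Real.one_le_exp (by linarith)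
  have hTv : 256 * v ≤ T := by nlinarith
  have hT0 : 0 < T := by linarith
  have hev : 0 < Real.exp v := Real.exp_pos v
  have hquad : 1 + v + v ^ 2 / 2 ≤ Real.exp v :=
    Real.quadratic_le_exp_of_nonneg (by linarith)
  have hTe : 2 * T + 3 ≤ Real.exp v := by
    have h1 : T ^ 2 ≤ (Real.exp v / 4) ^ 2 := by
      rw [hTsq]
      have h2 : c * Real.exp v * v ≤ 1 / 6 * (Real.exp v * v) := by
        rw [mul_assoc]
        exact mul_le_mul_of_nonneg_right hc6.le (by positivity)
      have h3 : (8 / 3 : ℝ) * v ≤ Real.exp v := by nlinarith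
      nlinarith
    have h4 : T ≤ Real.exp v / 4 := le_of_sq_le_sq h1 (by positivity)
    nlinarith
  set Q := ⌈Real.exp T⌉₊ with hQdef
  have hQge : Real.exp T ≤ Q := Nat.le_ceil _
  have hQpos : (0 : ℝ) < Q := lt_of_lt_of_le (Real.exp_pos T) hQge
  have hQ0 : 0 < Q := by exact_mod_cast hQpos
  have hQle : (Q : ℝ) ≤ Real.exp (T + 1) := by
    have h1 : (Q : ℝ) < Real.exp T + 1 := Nat.ceil_lt_add_one (Real.exp_pos T).le
    have h2 : 1 ≤ Real.exp T := Real.one_le_exp hT0.le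
    have h3 : (2 : ℝ) ≤ Real.exp 1 := by linarith [Real.add_one_le_exp (1 : ℝ)]
    rw [Real.exp_add]
    nlinarith
  have hQinv : (Q : ℝ)⁻¹ ≤ Real.exp (-T) := by
    rw [Real.exp_neg]; exact inv_anti₀ (Real.exp_pos T) hQge
  refine ⟨Q, hQ0, hQinv, ?_⟩
  set η := v / (4 * (T + 1)) with hη
  have hη0 : 0 < η := by positivity
  have hη2 : η ≤ 1 / 2 := by
    rw [hη, div_le_iff₀ (by positivity)]; linarith
  have hηT : (T + 1) * η = v / 4 := by
    rw [hη]; field_simp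
  have hmain := abs_log_H_sub_le hQ0 (σ := 1 - η) (by linarith) (by linarith) n
  refine hmain.trans ?_
  have hfirst : (n : ℝ) / Q ≤ n * Real.exp (-T) := by
    rw [div_eq_mul_inv]; exact mul_le_mul_of_nonneg_left hQinv hn0.le
  -- `Q ≤ 2 ^ (J + 1)` with `J ≤ log n`, so that `log J ≤ v`
  set J := ⌈2 * (T + 1)⌉₊ with hJ
  have hJge : 2 * (T + 1) ≤ J := Nat.le_ceil _
  have hJle : (J : ℝ) ≤ Real.exp v := by
    have : (J : ℝ) < 2 * (T + 1) + 1 := Nat.ceil_lt_add_one (by positivity)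
    linarith
  have hQJ : Q ≤ 2 ^ (J + 1) := by
    have h1 : Real.exp (T + 1) ≤ (2 : ℝ) ^ (J + 1) := by
      rw [← Real.exp_log (show (0 : ℝ) < 2 by norm_num), ← Real.exp_nat_mul,
        Real.exp_le_exp]
      push_cast
      have := Real.log_two_gt_d9
      nlinarith
    exact_mod_cast hQle.trans h1
  have hlogJ : Real.log J ≤ v := by
    rw [← Real.log_exp v]
    exact Real.log_le_log (by linarith) hJle
  have hsum : ∑ p ∈ Nat.primesLE Q, (p : ℝ) ^ (-(1 - η)) ≤ Real.exp (v / 4) * (5 + 4 * v) := by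
    calc ∑ p ∈ Nat.primesLE Q, (p : ℝ) ^ (-(1 - η))
        ≤ ∑ p ∈ Nat.primesLE Q, Real.exp (v / 4) * (p : ℝ)⁻¹ := by
          refine Finset.sum_le_sum fun p hp => ?_
          have hp0 : (0 : ℝ) < p := by exact_mod_cast (Nat.prime_of_mem_primesLE hp).pos
          have hpQ : (p : ℝ) ≤ Q := by exact_mod_cast Nat.le_of_mem_primesLE hp
          have e1 : (p : ℝ) ^ (-(1 - η)) = (p : ℝ) ^ η * (p : ℝ)⁻¹ := by
            rw [← Real.rpow_neg_one, ← Real.rpow_add hp0]; congr 1; ring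
          rw [e1]
          refine mul_le_mul_of_nonneg_right ?_ (by positivity)
          calc (p : ℝ) ^ η ≤ (Real.exp (T + 1)) ^ η :=
                Real.rpow_le_rpow hp0.le (hpQ.trans hQle) hη0.le
            _ = Real.exp (v / 4) := by rw [← Real.exp_mul, hηT]
      _ = Real.exp (v / 4) * ∑ p ∈ Nat.primesLE Q, (p : ℝ)⁻¹ := by rw [Finset.mul_sum]
      _ ≤ Real.exp (v / 4) * ∑ p ∈ Nat.primesLE (2 ^ (J + 1)), (p : ℝ)⁻¹ :=
          mul_le_mul_of_nonneg_left (Finset.sum_le_sum_of_subset_of_nonneg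
            (Nat.primesLE_mono hQJ) fun p _ _ => by positivity) (by positivity)
      _ ≤ Real.exp (v / 4) * (5 + 4 * v) :=
          mul_le_mul_of_nonneg_left (by linarith [sum_inv_primes_le J]) (by positivity)
  have hpow : (n : ℝ) ^ (1 - η) = n * Real.exp (-(η * Real.exp v)) := by
    rw [Real.rpow_def_of_pos hn0, ← hlog]
    conv_rhs => rw [← Real.exp_log hn0]
    rw [Real.log_exp, ← Real.exp_add]
    congr 1; ring
  -- `η log n = T² / (4 c (T + 1))` exceeds `T` by a margin because `1 / (4 c) > 3 / 2`
  have hηe : 5 / 4 * T ≤ η * Real.exp v := by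
    have h1 : 6 * T ^ 2 ≤ v * Real.exp v := by
      rw [hTsq]
      have : 0 < Real.exp v * v := by positivity
      nlinarith
    rw [hη, div_mul_eq_mul_div v, le_div_iff₀ (by positivity)]
    nlinarith
  have hsecond : (n : ℝ) ^ (1 - η) *
      Real.exp (8 * ∑ p ∈ Nat.primesLE Q, (p : ℝ) ^ (-(1 - η))) ≤ n * Real.exp (-T) := by
    rw [hpow, mul_assoc, ← Real.exp_add]
    refine mul_le_mul_of_nonneg_left (Real.exp_le_exp.2 ?_) hn0.le
    linarith
  linarith

theorem gp_free_count_asymptotic :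
    ∃ θ : ℝ, 1 < θ ∧
      Filter.Tendsto (fun n : ℕ => (H n : ℝ) ^ ((n : ℝ)⁻¹)) Filter.atTop (nhds θ) ∧
      ∀ ε : ℝ, 0 < ε → ε < 1 / 6 →
        ∃ K : ℝ, 0 < K ∧ ∃ N : ℕ, ∀ n : ℕ, N ≤ n →
          |Real.log (H n) - (n : ℝ) * Real.log θ| ≤
            K * n * Real.exp (-Real.sqrt ((1 / 6 - ε) * Real.log n * Real.log (Real.log n))) := by
  obtain ⟨Θ, hΘ, hQΘ⟩ := exists_rate
  have hΘpos : 0 < Θ := by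
    have : (1 / 2 : ℝ) ≤ Θ := by
      refine ge_of_tendsto hΘ ?_
      filter_upwards [Filter.eventually_gt_atTop 0] with n hn
      rw [le_div_iff₀ (by exact_mod_cast hn)]
      linarith [log_H_ge n]
    linarith
  refine ⟨Real.exp Θ, Real.one_lt_exp_iff.2 hΘpos, ?_, ?_⟩
  · refine ((Real.continuous_exp.tendsto Θ).comp hΘ).congr fun n => ?_
    have hH : (0 : ℝ) < H n := by
      rw [H_eq_gpCount]; exact_mod_cast gpCount_pos _
    rw [Function.comp, Real.rpow_def_of_pos hH, div_eq_mul_inv]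
  · intro ε hε hε6
    have hc : 0 < 1 / 6 - ε := by linarith
    have hl : Filter.Tendsto (fun n : ℕ => Real.log (n : ℝ)) Filter.atTop Filter.atTop :=
      Real.tendsto_log_atTop.comp tendsto_natCast_atTop_atTop
    have hev := (Real.tendsto_log_atTop.comp hl).eventually (eventually_exponent_small hc)
    obtain ⟨N, hN⟩ := Filter.eventually_atTop.1
      ((hev.and (hl.eventually_gt_atTop 0)).and (Filter.eventually_gt_atTop 0))
    refine ⟨3, by norm_num, N, fun n hn => ?_⟩
    obtain ⟨⟨⟨hv, hX⟩, hl0⟩, hn0⟩ := hN n hn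
    simp only [Function.comp] at hv hX
    rw [Real.exp_log hl0] at hX
    obtain ⟨Q, hQ0, hQ1, hQ2⟩ := exists_good_Q (n := n) hc (by linarith) hn0
      (Real.exp_log hl0).symm rfl hv (by rw [Real.exp_log hl0]; exact hX)
    rw [Real.exp_log hl0] at hQ1 hQ2
    set E := Real.exp (-Real.sqrt ((1 / 6 - ε) * Real.log n * Real.log (Real.log n)))
    rw [Real.log_exp]
    have h3 : |(n : ℝ) * windowRate Q - n * Θ| ≤ n * E := by
      rw [← mul_sub, abs_mul, abs_of_nonneg (show (0 : ℝ) ≤ n by positivity), abs_sub_comm]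
      exact mul_le_mul_of_nonneg_left ((hQΘ Q hQ0).trans hQ1) (by positivity)
    have h4 := abs_sub_le (Real.log (H n)) (n * windowRate Q) (n * Θ)
    linarith
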